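/- arXiv:2605.12995 — 2 statements merged into one kernel-verified Lean document; each statement's English description precedes it below -/
import Mathlib

section
/- Let E be a real normed vector space, θ₀ ∈ E, ε ∈ (0,1), A ∈ ℝ, and let ρ : E → ℝ be differentiable at θ₀ with ρ(θ₀) = 1. Then the clipped surrogate function θ ↦ min(ρ(θ)·A, clip(ρ(θ), 1−ε, 1+ε)·A) is differentiable at θ₀ and its Fréchet derivative at θ₀ equals A · Dρ(θ₀), where Dρ(θ₀) is the Fréchet derivative of ρ at θ₀. -/
/-- Clipping operator: clip(x, a, b) = max(a, min(x, b)). -/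
noncomputable def clip (x a b : ℝ) : ℝ := max a (min x b)

open Filter Set Topology

theorem clip_of_mem_Icc {x a b : ℝ} (hx : x ∈ Icc a b) : clip x a b = x := by
  rw [clip, min_eq_left hx.2, max_eq_right hx.1]

theorem clip_eventuallyEq_id {a b y : ℝ} (hy : y ∈ Ioo a b) :
    (fun x => clip x a b) =ᶠ[𝓝 y] id := by
  filter_upwards [Icc_mem_nhds hy.1 hy.2] with x hx using clip_of_mem_Icc hx

theorem hasDerivAt_min_mul_clip_mul {a b y : ℝ} (hy : y ∈ Ioo a b) (A : ℝ) :
    HasDerivAt (fun x => min (x * A) (clip x a b * A)) A y := by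
  refine (hasDerivAt_mul_const A).congr_of_eventuallyEq ?_
  filter_upwards [clip_eventuallyEq_id hy] with x hx
  rw [hx, id, min_self]

theorem clipped_surrogate_hasFDerivAt_general
    {E : Type*} [NormedAddCommGroup E] [NormedSpace ℝ E]
    {ρ : E → ℝ} {ρ' : E →L[ℝ] ℝ} {θ₀ : E} {a b : ℝ}
    (hρ : HasFDerivAt ρ ρ' θ₀) (hab : ρ θ₀ ∈ Ioo a b) (A : ℝ) :
    HasFDerivAt (fun θ => min (ρ θ * A) (clip (ρ θ) a b * A)) (A • ρ') θ₀ :=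
  (hasDerivAt_min_mul_clip_mul hab A).comp_hasFDerivAt θ₀ hρ

/-- If `ρ` is differentiable at `θ₀` with `ρ θ₀ = 1` and `ε ∈ (0,1)`, then the
clipped surrogate `θ ↦ min (ρ θ * A) (clip (ρ θ) (1-ε) (1+ε) * A)` is differentiable at `θ₀`
with Fréchet derivative `A • Dρ(θ₀)`. -/
theorem clipped_surrogate_hasFDerivAt
    {E : Type*} [NormedAddCommGroup E] [NormedSpace ℝ E]
    (θ₀ : E) (ε A : ℝ) (hε0 : 0 < ε) (hε1 : ε < 1)
    (ρ : E → ℝ) (hρ : DifferentiableAt ℝ ρ θ₀) (hρ1 : ρ θ₀ = 1) :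
    HasFDerivAt (fun θ => min (ρ θ * A) (clip (ρ θ) (1 - ε) (1 + ε) * A))
      (A • fderiv ℝ ρ θ₀) θ₀ := by
  have hmem : ρ θ₀ ∈ Ioo (1 - ε) (1 + ε) := by constructor <;> linarith
  exact clipped_surrogate_hasFDerivAt_general hρ.hasFDerivAt hmem A
end

section
/- Let E be a real normed vector space, θ₀ ∈ E, ε ∈ (0,1), G ≥ 1 a natural number. For each rollout index i ∈ {1,…,G}, let T_i ≥ 1 be a number of tokens, let A_i ∈ ℝ be a scalar advantage, and for each t ∈ {1,…,T_i} let ℓ_{i,t} : E → ℝ be a log-probability function differentiable at θ₀; define the per-token importance ratio ρ_{i,t}(θ) = exp(ℓ_{i,t}(θ) − ℓ_{i,t}(θ₀)). Define the phase loss L(θ) = −(1/G) Σ_{i=1}^{G} (1/T_i) Σ_{t=1}^{T_i} min(ρ_{i,t}(θ)·A_i, clip(ρ_{i,t}(θ), 1−ε, 1+ε)·A_i). Then L is differentiable at θ₀ and its Fréchet derivative at θ₀ equals the REINFORCE gradient −(1/G) Σ_{i=1}^{G} (A_i/T_i) Σ_{t=1}^{T_i} Dℓ_{i,t}(θ₀),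 which is a linear combination of the per-token log-probability derivatives weighted uniformly by the rollout advantage A_i. -/
/-! At `θ₀` every importance ratio equals `1`, which lies strictly inside the clipping range, so
near `θ₀` the clip is inactive by continuity and the surrogate is the linear function `ρ ↦ ρ * A`,
whatever the sign of `A`. Since `D exp(ℓ - ℓ(θ₀)) = exp(ℓ - ℓ(θ₀)) • Dℓ`, the derivative of the
ratio at `θ₀` is `Dℓ(θ₀)`. -/

open Filter Topology

/-- The importance ratio of the policy at `θ` to the sampling policy at `θ₀`, for a token whose
log-probability as a function of the parameter is `ℓ`. -/
noncomputable def importanceRatio {E : Type*} (ℓ : E → ℝ) (θ₀ θ : E) : ℝ :=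
  Real.exp (ℓ θ - ℓ θ₀)

/-- The clipped surrogate objective of one token with advantage `A` and importance ratio `ρ`. The
clipping range `[a, b]` may be asymmetric around `1`. -/
noncomputable def clippedSurrogate (a b A ρ : ℝ) : ℝ :=
  min (ρ * A) (clip ρ a b * A)

theorem clip_eq_self {x a b : ℝ} (hax : a ≤ x) (hxb : x ≤ b) : clip x a b = x := by
  rw [clip, min_eq_left hxb, max_eq_right hax]

section Surrogate

variable {a b ρ : ℝ}

theorem clippedSurrogate_eq_mul (A : ℝ) (ha : a ≤ ρ) (hb : ρ ≤ b) :
    clippedSurrogate a b A ρ = ρ * A := by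
  rw [clippedSurrogate, clip_eq_self ha hb, min_self]

theorem clippedSurrogate_eventuallyEq_mul (A : ℝ) (ha : a < ρ) (hb : ρ < b) :
    clippedSurrogate a b A =ᶠ[𝓝 ρ] fun r => r * A := by
  filter_upwards [Icc_mem_nhds ha hb] with r hr
  exact clippedSurrogate_eq_mul A hr.1 hr.2

theorem hasDerivAt_clippedSurrogate (A : ℝ) (ha : a < ρ) (hb : ρ < b) :
    HasDerivAt (clippedSurrogate a b A) A ρ :=
  (hasDerivAt_mul_const A).congr_of_eventuallyEq (clippedSurrogate_eventuallyEq_mul A ha hb)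

end Surrogate

theorem importanceRatio_self {E : Type*} (ℓ : E → ℝ) (θ₀ : E) : importanceRatio ℓ θ₀ θ₀ = 1 := by
  rw [importanceRatio, sub_self, Real.exp_zero]

section Derivative

variable {E : Type*} [NormedAddCommGroup E] [NormedSpace ℝ E] {θ₀ : E} {a b : ℝ}

theorem hasFDerivAt_importanceRatio {ℓ : E → ℝ} {ℓ' : E →L[ℝ] ℝ} (hℓ : HasFDerivAt ℓ ℓ' θ₀) :
    HasFDerivAt (importanceRatio ℓ θ₀) ℓ' θ₀ :=
  (hℓ.sub_const (ℓ θ₀)).exp.congr_fderiv <| by rw [sub_self, Real.exp_zero, one_smul]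

theorem hasFDerivAt_clippedSurrogate_importanceRatio {ℓ : E → ℝ} {ℓ' : E →L[ℝ] ℝ} (A : ℝ)
    (ha : a < 1) (hb : 1 < b) (hℓ : HasFDerivAt ℓ ℓ' θ₀) :
    HasFDerivAt (fun θ => clippedSurrogate a b A (importanceRatio ℓ θ₀ θ)) (A • ℓ') θ₀ := by
  have hsurrogate : HasDerivAt (clippedSurrogate a b A) A (importanceRatio ℓ θ₀ θ₀) := by
    rw [importanceRatio_self]
    exact hasDerivAt_clippedSurrogate A ha hb
  exact hsurrogate.comp_hasFDerivAt θ₀ (hasFDerivAt_importanceRatio hℓ)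

theorem phase_loss_hasFDerivAt_reinforce_general {ι : Type*} {τ : ι → Type*} (s : Finset ι)
    (u : (i : ι) → Finset (τ i)) (w A : ι → ℝ) (ha : a < 1) (hb : 1 < b)
    {ℓ : (i : ι) → τ i → E → ℝ} {ℓ' : (i : ι) → τ i → E →L[ℝ] ℝ}
    (hℓ : ∀ i ∈ s, ∀ t ∈ u i, HasFDerivAt (ℓ i t) (ℓ' i t) θ₀) :
    HasFDerivAt
      (fun θ => ∑ i ∈ s, w i *
        ∑ t ∈ u i, clippedSurrogate a b (A i) (importanceRatio (ℓ i t) θ₀ θ))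
      (∑ i ∈ s, (A i * w i) • ∑ t ∈ u i, ℓ' i t) θ₀ := by
  refine HasFDerivAt.fun_sum fun i hi => ?_
  have hrollout : HasFDerivAt
      (fun θ => ∑ t ∈ u i, clippedSurrogate a b (A i) (importanceRatio (ℓ i t) θ₀ θ))
      (A i • ∑ t ∈ u i, ℓ' i t) θ₀ := by
    rw [Finset.smul_sum]
    exact HasFDerivAt.fun_sum fun t ht =>
      hasFDerivAt_clippedSurrogate_importanceRatio (A i) ha hb (hℓ i hi t ht)
  rw [mul_comm, mul_smul]
  exact hrollout.const_mul (w i)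

end Derivative

/-- The GRPO phase loss
`L(θ) = -(1/G) Σᵢ (1/Tᵢ) Σₜ min(ρ_{i,t}(θ)·Aᵢ, clip(ρ_{i,t}(θ), 1-ε, 1+ε)·Aᵢ)`,
with per-token importance ratios `ρ_{i,t}(θ) = exp(ℓ_{i,t}(θ) - ℓ_{i,t}(θ₀))`, is differentiable
at `θ₀` and its Fréchet derivative equals the REINFORCE gradient
`-(1/G) Σᵢ (Aᵢ/Tᵢ) Σₜ Dℓ_{i,t}(θ₀)`. -/
theorem phase_loss_hasFDerivAt_reinforce
    {E : Type*} [NormedAddCommGroup E] [NormedSpace ℝ E]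
    (θ₀ : E) (ε : ℝ) (hε0 : 0 < ε) (hε1 : ε < 1)
    (G : ℕ) (hG : 1 ≤ G)
    (T : Fin G → ℕ) (hT : ∀ i, 1 ≤ T i)
    (A : Fin G → ℝ)
    (ℓ : (i : Fin G) → Fin (T i) → E → ℝ)
    (hℓ : ∀ i t, DifferentiableAt ℝ (ℓ i t) θ₀) :
    HasFDerivAt
      (fun θ => -(1 / (G : ℝ)) * ∑ i : Fin G, (1 / (T i : ℝ)) *
        ∑ t : Fin (T i),
          min (Real.exp (ℓ i t θ - ℓ i t θ₀) * A i)
              (clip (Real.exp (ℓ i t θ - ℓ i t θ₀)) (1 - ε) (1 + ε) * A i))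
      (-(1 / (G : ℝ)) • ∑ i : Fin G, (A i / (T i : ℝ)) •
        ∑ t : Fin (T i), fderiv ℝ (ℓ i t) θ₀)
      θ₀ := by
  have hsum := phase_loss_hasFDerivAt_reinforce_general Finset.univ (fun _ => Finset.univ)
    (fun i => 1 / (T i : ℝ)) A (sub_lt_self 1 hε0) (lt_add_of_pos_right 1 hε0)
    fun i _ t _ => (hℓ i t).hasFDerivAt
  simpa only [mul_one_div, clippedSurrogate, importanceRatio] using
    hsum.const_mul (-(1 / (G : ℝ)))
end
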